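/- Let s and t be integers with 2 ≤ s ≤ t. There exists a constant C > 0 (depending only on s and t) such that for every positive integer n, every K_{1,s,t}-free simple graph G on n vertices satisfies: every vertex of G lies in at most C · n^{2 - 1/s} triangles, and consequently G contains at most C · n^{3 - 1/s} triangles in total. -/

import Mathlib

/-!
The triangles through a vertex `v` correspond to the edges inside its neighbourhood `N`, and the
graph induced on `N` is `K_{s,t}`-free. The bound at `v` is therefore the Kővári–Sós–Turán theorem
for that graph: with `d y` the number of neighbours of `y` inside `N`, double counting the
pairs `(S, y)` with `S ⊆ N` an `s`-set of neighbours of `y ∈ N` gives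
`∑ y ∈ N, (d y).choose s ≤ t * |N|.choose s` (`sum_choose_le`), and the power mean inequality turns
this into `∑ y ∈ N, d y ≤ (s + t) * n ^ (2 - 1 / s)` (`sum_le_of_sum_choose_le`). Summing over all `v`
gives the bound on the total number of triangles.
-/

/-- `G` is `K_{1,s,t}`-free. -/
def K1stFree {V : Type*} (G : SimpleGraph V) (s t : ℕ) : Prop :=
  ¬ ∃ (v : V) (S T : Finset V), Disjoint S T ∧ v ∉ S ∧ v ∉ T ∧
      S.card = s ∧ T.card = t ∧
      (∀ x ∈ S, G.Adj v x) ∧ (∀ y ∈ T, G.Adj v y) ∧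
      ∀ x ∈ S, ∀ y ∈ T, G.Adj x y

/-- Double counting of the pairs `(S, y)` where `y ∈ N` and `S ⊆ N` is an `s`-set of neighbours of
`y`: an `s`-set with `t` common neighbours in `N` would give a `K_{1,s,t}` with apex `v`. -/
lemma sum_choose_le {V : Type*} [DecidableEq V] (G : SimpleGraph V) [DecidableRel G.Adj]
    (s t : ℕ) (v : V) (N : Finset V) (hN : ∀ x ∈ N, G.Adj v x) (hG : K1stFree G s t) :
    ∑ y ∈ N, (N.filter (G.Adj y)).card.choose s ≤ t * N.card.choose s := by
  let r : V → Finset V → Prop := fun y S => ∀ x ∈ S, G.Adj y x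
  have habove : ∀ y ∈ N, (N.filter (G.Adj y)).card.choose s =
      (Finset.bipartiteAbove r (N.powersetCard s) y).card := by
    intro y _
    rw [← Finset.card_powersetCard]
    congr 1
    ext S
    simp only [Finset.bipartiteAbove, Finset.mem_powersetCard, Finset.mem_filter, r,
      Finset.subset_iff]
    grind
  rw [Finset.sum_congr rfl habove, Finset.sum_card_bipartiteAbove_eq_sum_card_bipartiteBelow,
    mul_comm, ← Finset.card_powersetCard s N, ← smul_eq_mul]
  refine Finset.sum_le_card_nsmul _ _ _ fun S hS => ?_
  rw [Finset.mem_powersetCard] at hS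
  by_contra! hlt
  obtain ⟨T, hT, hTcard⟩ := Finset.exists_subset_card_eq hlt.le
  have hT' : ∀ y ∈ T, y ∈ N ∧ ∀ x ∈ S, G.Adj y x := fun y hy => by
    simpa [Finset.bipartiteBelow, r] using hT hy
  refine hG ⟨v, S, T, ?_, fun h => G.irrefl (hN v (hS.1 h)),
    fun h => G.irrefl (hN v (hT' v h).1), hS.2, hTcard, fun x hx => hN x (hS.1 hx),
    fun y hy => hN y (hT' y hy).1, fun x hx y hy => ((hT' y hy).2 x hx).symm⟩
  rw [Finset.disjoint_left]
  exact fun x hx hxT => G.irrefl ((hT' x hxT).2 x hx)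

/-- The analytic half of the Kővári–Sós–Turán argument. It rests on
`(d + 1 - s) ^ s ≤ s! * d.choose s` (truncated subtraction) and the power mean inequality; the
vertices with `d < s` are absorbed in the term `s * n`. -/
lemma sum_le_of_sum_choose_le {V : Type*} (s t n : ℕ) (hs : 2 ≤ s) (ht : 1 ≤ t) (hn : 1 ≤ n)
    (N : Finset V) (hNn : N.card ≤ n) (d : V → ℕ)
    (h : ∑ y ∈ N, (d y).choose s ≤ t * N.card.choose s) :
    ((∑ y ∈ N, d y : ℕ) : ℝ) ≤ ((s : ℝ) + t) * (n : ℝ) ^ ((2 : ℝ) - 1 / s) := by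
  have hs0 : (s : ℝ) ≠ 0 := by positivity
  have hn1 : (1 : ℝ) ≤ n := by exact_mod_cast hn
  have ht1 : (1 : ℝ) ≤ t := by exact_mod_cast ht
  have hpow : ∑ y ∈ N, (d y + 1 - s) ^ s ≤ t * n ^ s := calc
    ∑ y ∈ N, (d y + 1 - s) ^ s ≤ ∑ y ∈ N, s.factorial * (d y).choose s := by
        refine Finset.sum_le_sum fun y _ => ?_
        rw [← Nat.descFactorial_eq_factorial_mul_choose]
        exact Nat.pow_sub_le_descFactorial _ _
    _ = s.factorial * ∑ y ∈ N, (d y).choose s := by rw [Finset.mul_sum]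
    _ ≤ s.factorial * (t * N.card.choose s) := by gcongr
    _ = t * N.card.descFactorial s := by
        rw [Nat.descFactorial_eq_factorial_mul_choose]; ring
    _ ≤ t * N.card ^ s := by gcongr; exact Nat.descFactorial_le_pow _ _
    _ ≤ t * n ^ s := by gcongr
  obtain ⟨k, rfl⟩ : ∃ k, s = k + 1 := ⟨s - 1, by omega⟩
  have hmean : (∑ y ∈ N, (d y + 1 - (k + 1))) ^ (k + 1) ≤ n ^ k * (t * n ^ (k + 1)) := by
    calc _ ≤ N.card ^ k * ∑ y ∈ N, (d y + 1 - (k + 1)) ^ (k + 1) := by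
          exact pow_sum_le_card_mul_sum_pow (fun y _ => Nat.zero_le _) k
      _ ≤ _ := by gcongr
  have hroot : ((∑ y ∈ N, (d y + 1 - (k + 1)) : ℕ) : ℝ) ≤
      t * (n : ℝ) ^ ((2 : ℝ) - 1 / (k + 1 : ℕ)) := by
    refine le_of_pow_le_pow_left₀ (Nat.succ_ne_zero k) (by positivity) ?_
    have hexp : ((n : ℝ) ^ ((2 : ℝ) - 1 / (k + 1 : ℕ))) ^ (k + 1) = (n : ℝ) ^ k * n ^ (k + 1) := by
      rw [← Real.rpow_mul_natCast (by positivity), ← pow_add, ← Real.rpow_natCast]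
      congr 1
      field_simp
      push_cast
      ring
    calc ((∑ y ∈ N, (d y + 1 - (k + 1)) : ℕ) : ℝ) ^ (k + 1)
        ≤ (n : ℝ) ^ k * (t * n ^ (k + 1)) := by exact_mod_cast hmean
      _ = t * ((n : ℝ) ^ k * n ^ (k + 1)) := by ring
      _ ≤ (t : ℝ) ^ (k + 1) * ((n : ℝ) ^ k * n ^ (k + 1)) := by
          gcongr
          exact le_self_pow₀ ht1 (Nat.succ_ne_zero k)
      _ = _ := by rw [mul_pow, hexp]
  have hlin : (n : ℝ) ≤ (n : ℝ) ^ ((2 : ℝ) - 1 / (k + 1 : ℕ)) := by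
    conv_lhs => rw [← Real.rpow_one (n : ℝ)]
    refine Real.rpow_le_rpow_of_exponent_le hn1 ?_
    have : (1 : ℝ) / (k + 1 : ℕ) ≤ 1 := by
      rw [div_le_one (by positivity)]
      exact_mod_cast Nat.succ_le_succ (Nat.zero_le k)
    linarith
  have hsplit : ∑ y ∈ N, d y ≤ (k + 1) * n + ∑ y ∈ N, (d y + 1 - (k + 1)) := calc
    ∑ y ∈ N, d y ≤ ∑ y ∈ N, ((k + 1) + (d y + 1 - (k + 1))) :=
        Finset.sum_le_sum fun y _ => by omega
    _ = N.card * (k + 1) + ∑ y ∈ N, (d y + 1 - (k + 1)) := by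
        rw [Finset.sum_add_distrib, Finset.sum_const, smul_eq_mul]
    _ ≤ _ := by rw [mul_comm]; gcongr
  calc ((∑ y ∈ N, d y : ℕ) : ℝ)
      ≤ (k + 1 : ℕ) * (n : ℝ) + ((∑ y ∈ N, (d y + 1 - (k + 1)) : ℕ) : ℝ) := by
        exact_mod_cast hsplit
    _ ≤ (k + 1 : ℕ) * (n : ℝ) ^ ((2 : ℝ) - 1 / (k + 1 : ℕ)) +
          t * (n : ℝ) ^ ((2 : ℝ) - 1 / (k + 1 : ℕ)) := by gcongr
    _ = _ := by ring

/-- Each triangle through `v` is `{v, y, x}` with `y` a neighbour of `v` and `x` a common neighbour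
of `v` and `y`. -/
lemma ncard_triangles_le {V : Type*} [Fintype V] [DecidableEq V] (G : SimpleGraph V)
    [DecidableRel G.Adj] (v : V) :
    {T : Finset V | G.IsNClique 3 T ∧ v ∈ T}.ncard ≤
      ∑ y ∈ G.neighborFinset v, ((G.neighborFinset v).filter (G.Adj y)).card := by
  rw [← Finset.card_sigma]
  let P := (G.neighborFinset v).sigma fun y => (G.neighborFinset v).filter (G.Adj y)
  let f : (Σ _ : V, V) → Finset V := fun p => {v, p.1, p.2}
  have hsub : {T : Finset V | G.IsNClique 3 T ∧ v ∈ T} ⊆ (P.image f : Set (Finset V)) := by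
    rintro T ⟨hT, hv⟩
    obtain ⟨a, b, c, hab, hac, hbc, rfl⟩ := SimpleGraph.is3Clique_iff.1 hT
    simp only [Finset.coe_image, Set.mem_image, Finset.mem_coe]
    simp only [Finset.mem_insert, Finset.mem_singleton] at hv
    rcases hv with rfl | rfl | rfl
    · exact ⟨⟨b, c⟩, by simp [P, hab, hac, hbc], rfl⟩
    · exact ⟨⟨a, c⟩, by simp [P, hab.symm, hac, hbc], by grind⟩
    · exact ⟨⟨a, b⟩, by simp [P, hac.symm, hbc.symm, hab], by grind⟩
  calc _ ≤ (P.image f : Set (Finset V)).ncard := Set.ncard_le_ncard hsub (Finset.finite_toSet _)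
    _ = (P.image f).card := Set.ncard_coe_finset _
    _ ≤ P.card := Finset.card_image_le

theorem stmt8 (s t : ℕ) (hs : 2 ≤ s) (hst : s ≤ t) :
    ∃ C : ℝ, 0 < C ∧ ∀ (n : ℕ), 1 ≤ n →
      ∀ (V : Type) [Fintype V] (G : SimpleGraph V), Fintype.card V = n →
        K1stFree G s t →
        (∀ v : V, ({T : Finset V | G.IsNClique 3 T ∧ v ∈ T}.ncard : ℝ) ≤
            C * (n : ℝ) ^ ((2 : ℝ) - 1 / s)) ∧
        ({T : Finset V | G.IsNClique 3 T}.ncard : ℝ) ≤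
          C * (n : ℝ) ^ ((3 : ℝ) - 1 / s) := by
  classical
  refine ⟨(s : ℝ) + t, by positivity, fun n hn V _ G hV hG => ?_⟩
  have hlocal : ∀ v : V, ({T : Finset V | G.IsNClique 3 T ∧ v ∈ T}.ncard : ℝ) ≤
      ((s : ℝ) + t) * (n : ℝ) ^ ((2 : ℝ) - 1 / s) := fun v =>
    (Nat.cast_le.2 (ncard_triangles_le G v)).trans <|
      sum_le_of_sum_choose_le s t n hs (by omega) hn _ (hV ▸ Finset.card_le_univ _) _ <|
        sum_choose_le G s t v _ (fun x hx => by simpa using hx) hG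
  refine ⟨hlocal, ?_⟩
  have hcover : {T : Finset V | G.IsNClique 3 T}.ncard ≤
      ∑ v : V, {T : Finset V | G.IsNClique 3 T ∧ v ∈ T}.ncard := by
    simp only [Set.ncard_eq_toFinset_card']
    refine le_trans (Finset.card_le_card ?_) Finset.card_biUnion_le
    intro T hT
    have hT3 : G.IsNClique 3 T := by simpa using hT
    obtain ⟨v, hv⟩ : T.Nonempty := Finset.card_pos.1 (by rw [hT3.card_eq]; norm_num)
    simpa [hT3] using ⟨v, hv⟩
  have hn0 : (0 : ℝ) < n := by exact_mod_cast hn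
  calc ({T : Finset V | G.IsNClique 3 T}.ncard : ℝ)
      ≤ ∑ v : V, ({T : Finset V | G.IsNClique 3 T ∧ v ∈ T}.ncard : ℝ) := by exact_mod_cast hcover
    _ ≤ ∑ _v : V, ((s : ℝ) + t) * (n : ℝ) ^ ((2 : ℝ) - 1 / s) :=
        Finset.sum_le_sum fun v _ => hlocal v
    _ = ((s : ℝ) + t) * ((n : ℝ) ^ ((2 : ℝ) - 1 / s) * n) := by
        rw [Finset.sum_const, Finset.card_univ, hV, nsmul_eq_mul]; ring
    _ = ((s : ℝ) + t) * (n : ℝ) ^ ((3 : ℝ) - 1 / s) := by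
        rw [← Real.rpow_add_one hn0.ne']
        congr 2
        ring
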